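/- arXiv:2601.21645 — 4 statements merged into one kernel-verified Lean document; each statement's English description precedes it below -/
import Mathlib

section
/- Let a model of depth L ≥ 2 be given, let G be a group acting on V_0 and V_L, and suppose the adjunction property holds. Let θ ∈ Θ be a parameter such that (i) θ is identifiable and (ii) the model is G-equivariant at θ. Then there exist group homomorphisms ρ_i : G → K_i for i = 1, …, L−1 such that f_1(g · x; θ_1) = ρ_1(g) · f_1(x; θ_1) for all x ∈ V_0, f_i(ρ_{i−1}(g) · x; θ_i) = ρ_i(g) · f_i(x; θ_i) for all 1 < i < L and x ∈ V_{i−1}, and f_L(ρ_{L−1}(g) · x; θ_L) = g · f_L(x; θ_L) for all x ∈ V_{L−1} and all g ∈ G. -/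
/-!
Twisting the first and last parameters of `θ` by `g` gives a parameter `twist M θ g` whose
end-to-end function is, by the adjunction property, `x ↦ g • f(g⁻¹ • x; θ)`; by equivariance this
is the end-to-end function at `θ`. Unwinding definitions (`layerSymmetries_twist_iff`), a sequence
of latent symmetries `k` relating `twist M θ g` to `θ` is the same as a sequence `r = k⁻¹` making
every layer equivariant with respect to `g`. Identifiability thus provides, for each `g`, such a
sequence `r g`, unique in degrees `0, …, M + 2`. Since `r g * r h` does the job for `g * h`,
uniqueness forces `r (g * h) = r g * r h`, so each `g ↦ r g i` is a homomorphism.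
-/

/- A model of depth `n` is given by latent spaces `V 0, …, V n`, parameter spaces
`Θ 1, …, Θ n` (here `Θ i` in Lean is the parameter space of the `(i+1)`-st layer),
and layer maps `f i : V i → Θ i → V (i+1)` (the `(i+1)`-st layer).
We model depth `L ≥ 2` as `L = M + 2`. -/

universe u v w

/-- The end-to-end function of a model: composition of the first `n` layers. -/
def endToEnd {V : ℕ → Type u} {Θ : ℕ → Type v}
    (f : ∀ i, V i → Θ i → V (i + 1)) (θ : ∀ i, Θ i) : ∀ n, V 0 → V n
  | 0, x => x
  | n + 1, x => f n (endToEnd f θ n x) (θ n)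

/-- The sequence `k 0, …, k n` of latent symmetries relates the layers at `θ'` to the
layers at `θ` via inter-layer transformations:
`f_i(x; θ'_i) = k_i • f_i(k_{i-1}⁻¹ • x; θ_i)` for all layers. -/
def LayerSymmetries {V : ℕ → Type u} {Θ : ℕ → Type v} (n : ℕ)
    (f : ∀ i, V i → Θ i → V (i + 1))
    (K : ℕ → Type w) [∀ i, Group (K i)] [∀ i, MulAction (K i) (V i)]
    (θ θ' : ∀ i, Θ i) (k : ∀ i, K i) : Prop :=
  ∀ i < n, ∀ x : V i, f i x (θ' i) = k (i + 1) • f i ((k i)⁻¹ • x) (θ i)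

/-- A parameter `θ` of a depth-`n` model is identifiable if any `θ'` inducing the same
end-to-end function is related to `θ` by a unique sequence of latent symmetries
`k 0 ∈ K 0, …, k n ∈ K n`. -/
def Identifiable {V : ℕ → Type u} {Θ : ℕ → Type v} (n : ℕ)
    (f : ∀ i, V i → Θ i → V (i + 1))
    (K : ℕ → Type w) [∀ i, Group (K i)] [∀ i, MulAction (K i) (V i)]
    (θ : ∀ i, Θ i) : Prop :=
  ∀ θ' : ∀ i, Θ i,
    (∀ x : V 0, endToEnd f θ' n x = endToEnd f θ n x) →
    ∃ k : ∀ i, K i, LayerSymmetries n f K θ θ' k ∧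
      ∀ k' : ∀ i, K i, LayerSymmetries n f K θ θ' k' → ∀ i ≤ n, k' i = k i

section Twist

variable {V : ℕ → Type u} {Θ : ℕ → Type v} {G : Type*} [Group G] {M : ℕ}

/-- The parameter obtained from `θ` by acting with `g` on the parameters of the first layer
(index `0`) and of the last layer (index `M + 1`). -/
def twist (M : ℕ) [MulAction G (Θ 0)] [MulAction G (Θ (M + 1))] (θ : ∀ i, Θ i) (g : G) :
    ∀ i, Θ i :=
  Function.update (Function.update θ 0 (g • θ 0)) (M + 1) (g • θ (M + 1))

section

variable [MulAction G (Θ 0)] [MulAction G (Θ (M + 1))] (θ : ∀ i, Θ i) (g : G)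

lemma twist_zero : twist M θ g 0 = g • θ 0 := by
  simp [twist]

lemma twist_last : twist M θ g (M + 1) = g • θ (M + 1) := by
  simp [twist]

lemma twist_mid {i : ℕ} (h0 : 0 < i) (hi : i ≤ M) : twist M θ g i = θ i := by
  rw [twist, Function.update_of_ne (by omega), Function.update_of_ne (by omega)]

end

/-- The elements `r i : K i` make every layer at `θ` equivariant with respect to `g`, where `g`
itself acts on the input and output spaces. Only `r 1, …, r (M + 1)` matter. -/
def IsLayerwiseEquivariant (M : ℕ) (f : ∀ i, V i → Θ i → V (i + 1))
    (K : ℕ → Type w) [∀ i, Group (K i)] [∀ i, MulAction (K i) (V i)]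
    [MulAction G (V 0)] [MulAction G (V (M + 2))]
    (θ : ∀ i, Θ i) (g : G) (r : ∀ i, K i) : Prop :=
  (∀ x : V 0, f 0 (g • x) (θ 0) = r 1 • f 0 x (θ 0)) ∧
  (∀ i, 0 < i → i ≤ M → ∀ x : V i, f i (r i • x) (θ i) = r (i + 1) • f i x (θ i)) ∧
  (∀ x : V (M + 1), f (M + 1) (r (M + 1) • x) (θ (M + 1)) = g • f (M + 1) x (θ (M + 1)))

variable {f : ∀ i, V i → Θ i → V (i + 1)}
  {K : ℕ → Type w} [∀ i, Group (K i)] [∀ i, MulAction (K i) (V i)]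
  [MulAction G (V 0)] [MulAction G (V (M + 2))] {θ : ∀ i, Θ i}

lemma IsLayerwiseEquivariant.mul {g h : G} {r s : ∀ i, K i}
    (hr : IsLayerwiseEquivariant M f K θ g r) (hs : IsLayerwiseEquivariant M f K θ h s) :
    IsLayerwiseEquivariant M f K θ (g * h) (r * s) := by
  refine ⟨fun x => ?_, fun i h0 hi x => ?_, fun x => ?_⟩
  · rw [mul_smul, hr.1, hs.1, Pi.mul_apply, mul_smul]
  · rw [Pi.mul_apply, Pi.mul_apply, mul_smul, mul_smul, hr.2.1 i h0 hi, hs.2.1 i h0 hi]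
  · rw [Pi.mul_apply, mul_smul, mul_smul, hr.2.2, hs.2.2]

variable [MulAction G (Θ 0)] [MulAction G (Θ (M + 1))]

lemma endToEnd_twist_succ
    (adj_first : ∀ (g : G) (x : V 0) (t : Θ 0), f 0 (g • x) t = f 0 x (g⁻¹ • t))
    (g : G) (x : V 0) (n : ℕ) (hn : n ≤ M) :
    endToEnd f (twist M θ g) (n + 1) x = endToEnd f θ (n + 1) (g⁻¹ • x) := by
  induction n with
  | zero => simp [endToEnd, adj_first, twist_zero]
  | succ n ih =>
    rw [endToEnd, ih (by omega), twist_mid θ g (by omega) hn]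
    rfl

/-- An equivariant end-to-end function does not change when `θ` is twisted. -/
lemma endToEnd_twist
    (adj_first : ∀ (g : G) (x : V 0) (t : Θ 0), f 0 (g • x) t = f 0 x (g⁻¹ • t))
    (adj_last : ∀ (g : G) (x : V (M + 1)) (t : Θ (M + 1)),
      g • f (M + 1) x t = f (M + 1) x (g • t))
    (hequiv : ∀ (g : G) (x : V 0),
      endToEnd f θ (M + 2) (g • x) = g • endToEnd f θ (M + 2) x)
    (g : G) (x : V 0) :
    endToEnd f (twist M θ g) (M + 2) x = endToEnd f θ (M + 2) x := by
  rw [endToEnd, endToEnd_twist_succ adj_first g x M le_rfl, twist_last, ← adj_last]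
  change g • endToEnd f θ (M + 2) (g⁻¹ • x) = _
  rw [← hequiv, smul_inv_smul]

/-- Latent symmetries from `θ` to its twist by `g` are the inverses of the sequences making the
layers at `θ` equivariant with respect to `g`. -/
lemma layerSymmetries_twist_iff
    (hK0 : ∀ k : K 0, k = 1) (hKL : ∀ k : K (M + 2), k = 1)
    (adj_first : ∀ (g : G) (x : V 0) (t : Θ 0), f 0 (g • x) t = f 0 x (g⁻¹ • t))
    (adj_last : ∀ (g : G) (x : V (M + 1)) (t : Θ (M + 1)),
      g • f (M + 1) x t = f (M + 1) x (g • t))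
    (g : G) (r : ∀ i, K i) :
    LayerSymmetries (M + 2) f K θ (twist M θ g) r⁻¹ ↔ IsLayerwiseEquivariant M f K θ g r := by
  have first (x : V 0) : f 0 x (g • θ 0) = f 0 (g⁻¹ • x) (θ 0) := by
    rw [adj_first, inv_inv]
  constructor
  · intro h
    refine ⟨fun x => ?_, fun i h0 hi x => ?_, fun x => ?_⟩
    · have := h 0 (by omega) (g • x)
      rw [twist_zero, first, inv_smul_smul, hK0 (r⁻¹ 0), inv_one, one_smul] at this
      rw [this, Pi.inv_apply, smul_inv_smul]
    · have := h i (by omega) x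
      rw [twist_mid θ g h0 hi, Pi.inv_apply, Pi.inv_apply, inv_inv] at this
      rw [this, smul_inv_smul]
    · have := h (M + 1) (by omega) x
      rw [twist_last, ← adj_last, hKL (r⁻¹ (M + 1 + 1)), one_smul, Pi.inv_apply, inv_inv] at this
      exact this.symm
  · rintro ⟨h1, h2, h3⟩ i hi x
    rcases Nat.eq_zero_or_pos i with rfl | h0
    · rw [twist_zero, first, hK0 (r⁻¹ 0), inv_one, one_smul, Pi.inv_apply, eq_inv_smul_iff,
        ← h1, smul_inv_smul]
    · rcases Nat.lt_or_ge M i with hM | hM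
      · obtain rfl : i = M + 1 := by omega
        rw [twist_last, ← adj_last, hKL (r⁻¹ (M + 1 + 1)), one_smul, Pi.inv_apply, inv_inv, h3]
      · rw [twist_mid θ g h0 hM, Pi.inv_apply, Pi.inv_apply, inv_inv, h2 i h0 hM, inv_smul_smul]

end Twist

/-- **Identifiable equivariant networks are layerwise equivariant.**
For a model of depth `L = M + 2 ≥ 2` with trivial symmetry groups on the input and
output spaces, with a group `G` acting on `V 0`, `V L`, `Θ 1`, `Θ L` satisfying the
adjunction property, if `θ` is identifiable and the model is `G`-equivariant at `θ`,
then there are group homomorphisms `ρ i : G →* K i` (used for `i = 1, …, L - 1`)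
making every layer `G`-equivariant at `θ`. -/
theorem identifiable_equivariant_is_layerwise_equivariant (M : ℕ)
    (V : ℕ → Type u) (Θ : ℕ → Type v)
    (f : ∀ i, V i → Θ i → V (i + 1))
    (K : ℕ → Type w) [∀ i, Group (K i)] [∀ i, MulAction (K i) (V i)]
    (hK0 : ∀ k : K 0, k = 1) (hKL : ∀ k : K (M + 2), k = 1)
    (G : Type*) [Group G]
    [MulAction G (V 0)] [MulAction G (V (M + 2))]
    [MulAction G (Θ 0)] [MulAction G (Θ (M + 1))]
    (adj_first : ∀ (g : G) (x : V 0) (t : Θ 0), f 0 (g • x) t = f 0 x (g⁻¹ • t))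
    (adj_last : ∀ (g : G) (x : V (M + 1)) (t : Θ (M + 1)),
      g • f (M + 1) x t = f (M + 1) x (g • t))
    (θ : ∀ i, Θ i)
    (hident : Identifiable (M + 2) f K θ)
    (hequiv : ∀ (g : G) (x : V 0),
      endToEnd f θ (M + 2) (g • x) = g • endToEnd f θ (M + 2) x) :
    ∃ ρ : ∀ i, G →* K i,
      (∀ (g : G) (x : V 0), f 0 (g • x) (θ 0) = ρ 1 g • f 0 x (θ 0)) ∧
      (∀ i, 0 < i → i ≤ M → ∀ (g : G) (x : V i),
        f i (ρ i g • x) (θ i) = ρ (i + 1) g • f i x (θ i)) ∧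
      (∀ (g : G) (x : V (M + 1)),
        f (M + 1) (ρ (M + 1) g • x) (θ (M + 1)) = g • f (M + 1) x (θ (M + 1))) := by
  have key (g : G) : ∃ r : ∀ i, K i, IsLayerwiseEquivariant M f K θ g r ∧
      ∀ s, IsLayerwiseEquivariant M f K θ g s → ∀ i ≤ M + 2, s i = r i := by
    obtain ⟨k, hk, huniq⟩ := hident (twist M θ g) (endToEnd_twist adj_first adj_last hequiv g)
    refine ⟨k⁻¹, ?_, fun s hs i hi => ?_⟩
    · rwa [← layerSymmetries_twist_iff hK0 hKL adj_first adj_last, inv_inv]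
    · rw [← layerSymmetries_twist_iff hK0 hKL adj_first adj_last] at hs
      rw [Pi.inv_apply, ← huniq _ hs i hi, Pi.inv_apply, inv_inv]
  choose r hr huniq using key
  -- Uniqueness says nothing in degrees above `M + 2`, where the trivial homomorphism is used.
  let ρ : ∀ i, G →* K i := fun i =>
    if hi : i ≤ M + 2 then
      MonoidHom.mk' (fun g => r g i)
        fun g h => (huniq (g * h) _ ((hr g).mul (hr h)) i hi).symm
    else 1
  have hρ (i : ℕ) (hi : i ≤ M + 2) (g : G) : ρ i g = r g i := by
    simp [ρ, hi]
  refine ⟨ρ, fun g x => ?_, fun i h0 hi g x => ?_, fun g x => ?_⟩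
  · rw [hρ 1 (by omega), (hr g).1]
  · rw [hρ i (by omega), hρ (i + 1) (by omega), (hr g).2.1 i h0 hi]
  · rw [hρ (M + 1) (by omega), (hr g).2.2]
end

section
/- Let a model of depth L ≥ 2 be given, let G be a group acting on V_0 and V_L, and suppose the adjunction property holds. Suppose the model is G-equivariant at θ ∈ Θ. For g ∈ G define the parameter θ^g ∈ Θ by θ^g_1 = g⁻¹ · θ_1, θ^g_L = g⁻¹ · θ_L, and θ^g_i = θ_i for 1 < i < L. Then f(·; θ^g) = f(·; θ), i.e., f(x; θ^g) = f(x; θ) for all x ∈ V_0. -/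
/-! By adjunction at the first layer, `θ^g` and `θ` give the same value just before the last layer
once the input of the latter is moved by `g`. By adjunction at the last layer this yields
`f(x; θ^g) = g⁻¹ • f(g • x; θ)`, and the right-hand side is `f(x; θ)` by equivariance at `θ`. -/

/- A model of depth `L ≥ 2` (here `L = M + 2`) is given by latent spaces `V 0, …, V L`,
parameter spaces `Θ 1, …, Θ L` (Lean's `Θ i` is the parameter space of the `(i+1)`-st
layer), and layer maps `f i : V i → Θ i → V (i+1)`. -/

universe u v

/-- If the model is `G`-equivariant at `θ` and the adjunction property holds, then the
parameter `θ^g` obtained by acting with `g⁻¹` on the first- and last-layer parameters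
(and leaving all middle layers unchanged) induces the same end-to-end function as `θ`. -/
theorem endToEnd_twisted_parameter (M : ℕ)
    (V : ℕ → Type u) (Θ : ℕ → Type v)
    (f : ∀ i, V i → Θ i → V (i + 1))
    (G : Type*) [Group G]
    [MulAction G (V 0)] [MulAction G (V (M + 2))]
    [MulAction G (Θ 0)] [MulAction G (Θ (M + 1))]
    (adj_first : ∀ (g : G) (x : V 0) (t : Θ 0), f 0 (g • x) t = f 0 x (g⁻¹ • t))
    (adj_last : ∀ (g : G) (x : V (M + 1)) (t : Θ (M + 1)),
      g • f (M + 1) x t = f (M + 1) x (g • t))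
    (θ : ∀ i, Θ i)
    (hequiv : ∀ (g : G) (x : V 0),
      endToEnd f θ (M + 2) (g • x) = g • endToEnd f θ (M + 2) x)
    (g : G) (θg : ∀ i, Θ i)
    (hθg_first : θg 0 = g⁻¹ • θ 0)
    (hθg_last : θg (M + 1) = g⁻¹ • θ (M + 1))
    (hθg_mid : ∀ i, 0 < i → i < M + 1 → θg i = θ i) :
    ∀ x : V 0, endToEnd f θg (M + 2) x = endToEnd f θ (M + 2) x := by
  intro x
  -- Below the last layer, twisting the first parameter by `g⁻¹` amounts to moving the input by `g`.
  have key : ∀ n, n ≤ M → endToEnd f θg (n + 1) x = endToEnd f θ (n + 1) (g • x) := by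
    intro n
    induction n with
    | zero =>
      intro _
      change f 0 x (θg 0) = f 0 (g • x) (θ 0)
      rw [hθg_first, adj_first]
    | succ n ih =>
      intro hn
      change f (n + 1) (endToEnd f θg (n + 1) x) (θg (n + 1))
        = f (n + 1) (endToEnd f θ (n + 1) (g • x)) (θ (n + 1))
      rw [ih (by omega), hθg_mid (n + 1) (by omega) (by omega)]
  -- The twist of the last parameter pulls out as `g⁻¹`, which equivariance cancels against `g`.
  calc endToEnd f θg (M + 2) x
      = f (M + 1) (endToEnd f θg (M + 1) x) (θg (M + 1)) := rfl
    _ = f (M + 1) (endToEnd f θ (M + 1) (g • x)) (g⁻¹ • θ (M + 1)) := by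
        rw [key M le_rfl, hθg_last]
    _ = g⁻¹ • endToEnd f θ (M + 2) (g • x) := (adj_last _ _ _).symm
    _ = endToEnd f θ (M + 2) x := by rw [hequiv, inv_smul_smul]
end

section
/- Let a model of depth L ≥ 2 be given and let G be a group acting on every latent space V_i (i = 0, …, L) and on every parameter space Θ_i (i = 1, …, L), such that the G-action on each V_i commutes with the K_i-action, and such that the generalized adjunction property g⁻¹ · f_i(g · x; θ_i) = f_i(x; g⁻¹ · θ_i) holds for all i = 1, …, L, g ∈ G, x ∈ V_{i−1}, θ_i ∈ Θ_i. Suppose θ ∈ Θ is identifiable and the model is G-equivariant at θ (with respect to the given actions on V_0 and V_L). Then there exist group actions of G on V_1, …, V_{L−1} (each of the form g ∘ x = ρ_i(g) · (g · x) for a group homomorphism ρ_i : G → K_i) such that every layer f_i is G-equivariant at θ_i: f_i(g ∘ x; θ_i) = g ∘ f_i(x; θ_i) for all g ∈ G and x ∈ V_{i−1}, where on V_0 and V_L the actions are the given ones. -/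
/-! Acting by `g⁻¹` on all parameters turns each layer into its conjugate
`x ↦ g⁻¹ • f i (g • x) (θ i)`, by the adjunction property. Hence the end-to-end function gets
conjugated by `g` as well (`endToEnd_inv_smul`), and equivariance says that it does not change.
Identifiability therefore yields a unique sequence `k i` of latent symmetries relating `θ` to
`g⁻¹ • θ`, which amounts to `f i (k i • g • x) (θ i) = k (i + 1) • g • f i x (θ i)`
(`layerSymmetries_inv_smul_iff`): every layer is equivariant for the twisted actions. These
intertwining relations compose, because the actions of `G` and `K i` commute, so uniqueness makes
`g ↦ k i` multiplicative. Identifiability says nothing about `K i` beyond the depth of the model;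
there the trivial homomorphism is used. -/

/- A model of depth `L ≥ 2` (here `L = M + 2`) is given by latent spaces `V 0, …, V L`,
parameter spaces `Θ 1, …, Θ L` (Lean's `Θ i` is the parameter space of the `(i+1)`-st
layer), and layer maps `f i : V i → Θ i → V (i+1)`. Each `V i` carries an action of a
group `K i`, with `K 0` and `K L` trivial. -/

universe u v w

/-- Under the adjunction property, acting by `g⁻¹` on all parameters conjugates the end-to-end
function by `g`. -/
theorem endToEnd_inv_smul {V : ℕ → Type u} {Θ : ℕ → Type v} {n : ℕ}
    {f : ∀ i, V i → Θ i → V (i + 1)} {G : Type*} [Group G]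
    [∀ i, MulAction G (V i)] [∀ i, MulAction G (Θ i)]
    (adj : ∀ i < n, ∀ (g : G) (x : V i) (t : Θ i), g⁻¹ • f i (g • x) t = f i x (g⁻¹ • t))
    (θ : ∀ i, Θ i) (g : G) (x : V 0) :
    ∀ m ≤ n, endToEnd f (fun i => g⁻¹ • θ i) m x = g⁻¹ • endToEnd f θ m (g • x)
  | 0, _ => by simp [endToEnd]
  | m + 1, hm => by
    simp only [endToEnd]
    rw [← adj m hm, endToEnd_inv_smul adj θ g x m (by omega), smul_inv_smul]

/-- The symmetries relating `θ` to `g⁻¹ • θ` are those whose twisted actions make every layer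
commute with `g`. -/
theorem layerSymmetries_inv_smul_iff {V : ℕ → Type u} {Θ : ℕ → Type v} {n : ℕ}
    {f : ∀ i, V i → Θ i → V (i + 1)}
    {K : ℕ → Type w} [∀ i, Group (K i)] [∀ i, MulAction (K i) (V i)]
    {G : Type*} [Group G] [∀ i, MulAction G (V i)] [∀ i, MulAction G (Θ i)]
    (hcomm : ∀ (i : ℕ) (g : G) (k : K i) (x : V i), g • k • x = k • g • x)
    (adj : ∀ i < n, ∀ (g : G) (x : V i) (t : Θ i), g⁻¹ • f i (g • x) t = f i x (g⁻¹ • t))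
    (θ : ∀ i, Θ i) (g : G) (k : ∀ i, K i) :
    LayerSymmetries n f K θ (fun i => g⁻¹ • θ i) k ↔
      ∀ i < n, ∀ x : V i, f i (k i • g • x) (θ i) = k (i + 1) • g • f i x (θ i) := by
  refine forall₂_congr fun i hi => ⟨fun h x => ?_, fun h x => ?_⟩
  · have := h (k i • x)
    rwa [← adj i hi, inv_smul_smul, inv_smul_eq_iff, hcomm, hcomm] at this
  · rw [← adj i hi, inv_smul_eq_iff, hcomm, ← h, hcomm, smul_inv_smul]

/-- **Layerwise equivariance under the generalized adjunction property.**
Let `G` act on every latent space `V i` (commuting with the `K i`-action) and on every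
parameter space `Θ i`, satisfying the generalized adjunction property
`g⁻¹ • f i (g • x) t = f i x (g⁻¹ • t)` in all layers. If `θ` is identifiable and the
model is `G`-equivariant at `θ`, then there are group homomorphisms `ρ i : G →* K i`
such that every layer is `G`-equivariant at `θ` with respect to the twisted actions
`g ∘ x = ρ i g • (g • x)` on the hidden spaces `V 1, …, V (L-1)` and the given actions
on `V 0` and `V L`. -/
theorem generalized_adjunction_layerwise_equivariance (M : ℕ)
    (V : ℕ → Type u) (Θ : ℕ → Type v)
    (f : ∀ i, V i → Θ i → V (i + 1))
    (K : ℕ → Type w) [∀ i, Group (K i)] [∀ i, MulAction (K i) (V i)]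
    (hK0 : ∀ k : K 0, k = 1) (hKL : ∀ k : K (M + 2), k = 1)
    (G : Type*) [Group G]
    [∀ i, MulAction G (V i)] [∀ i, MulAction G (Θ i)]
    (hcomm : ∀ (i : ℕ) (g : G) (k : K i) (x : V i), g • k • x = k • g • x)
    (adj : ∀ i < M + 2, ∀ (g : G) (x : V i) (t : Θ i),
      g⁻¹ • f i (g • x) t = f i x (g⁻¹ • t))
    (θ : ∀ i, Θ i)
    (hident : Identifiable (M + 2) f K θ)
    (hequiv : ∀ (g : G) (x : V 0),
      endToEnd f θ (M + 2) (g • x) = g • endToEnd f θ (M + 2) x) :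
    ∃ ρ : ∀ i, G →* K i,
      (∀ (g : G) (x : V 0),
        f 0 (g • x) (θ 0) = ρ 1 g • g • f 0 x (θ 0)) ∧
      (∀ i, 0 < i → i ≤ M → ∀ (g : G) (x : V i),
        f i (ρ i g • g • x) (θ i) = ρ (i + 1) g • g • f i x (θ i)) ∧
      (∀ (g : G) (x : V (M + 1)),
        f (M + 1) (ρ (M + 1) g • g • x) (θ (M + 1)) = g • f (M + 1) x (θ (M + 1))) := by
  have hsym (g : G) := hident (fun i => g⁻¹ • θ i) fun x => by
    rw [endToEnd_inv_smul adj θ g x _ le_rfl, hequiv, inv_smul_smul]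
  simp only [layerSymmetries_inv_smul_iff hcomm adj] at hsym
  choose k hk huniq using hsym
  have hmul (g h : G) (i : ℕ) (hi : i ≤ M + 2) : k (g * h) i = k g i * k h i := by
    refine (huniq (g * h) (fun i => k g i * k h i) (fun j hj x => ?_) i hi).symm
    rw [mul_smul, mul_smul, ← hcomm j g, hk g j hj, hk h j hj, hcomm, mul_smul, mul_smul]
  let ρ (i : ℕ) : G →* K i :=
    if hi : i ≤ M + 2 then MonoidHom.mk' (fun g => k g i) fun g h => hmul g h i hi else 1
  have hρ (i : ℕ) (hi : i ≤ M + 2) (g : G) : ρ i g = k g i := by simp [ρ, hi]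
  refine ⟨ρ, fun g x => ?_, fun i _ hi g x => ?_, fun g x => ?_⟩
  · rw [hρ 1 (by omega), ← hk g 0 (by omega), hK0 (k g 0), one_smul]
  · rw [hρ i (by omega), hρ (i + 1) (by omega), hk g i (by omega)]
  · rw [hρ (M + 1) (by omega), hk g (M + 1) (by omega), hKL (k g (M + 1 + 1)), one_smul]
end

section
/- Let an MLP of depth L ≥ 2 with widths d_0, …, d_L and activation σ : ℝ → ℝ be given, with layers f_i(x; W_i, b_i) = σ(W_i x + b_i) for i = 1, …, L−1 (σ applied coordinatewise) and f_L(x; W_L, b_L) = W_L x + b_L. Suppose for each i = 1, …, L−1 there are matrices A_i, B_i ∈ GL(d_i, ℝ) with σ(A_i y) = B_i σ(y) for all y ∈ ℝ^{d_i}. Define new parameters by W_1' = A_1 W_1, b_1' = A_1 b_1; W_i' = A_i W_i B_{i−1}⁻¹, b_i' = A_i b_i for 1 < i < L; and W_L' = W_L B_{L−1}⁻¹, b_L' = b_L. Then the end-to-end functions coincide: for all x ∈ ℝ^{d_0}, the composition of the layers with parameters (W_i', b_i') equals the composition with parameters (W_i, b_i). -/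
/-! By induction on the depth, the output of the `n`-th hidden layer of the transformed network
is `B n` applied to the output of the original one (`key`): the factor `(B (n - 1))⁻¹` in the new
weight cancels the matrix inherited from the previous layer, so the new preactivation is `A n`
times the old one, and the intertwining relation turns `A n` into `B n` across `σ`. The final
weight absorbs the last `B`. -/

/- An MLP of depth `L = M + 2 ≥ 2` with widths `d 0, …, d (M+2)` and activation `σ`:
the `(i+1)`-st layer has weight matrix `W i : ℝ^{d (i+1) × d i}` and bias
`b i : ℝ^{d (i+1)}`; hidden layers apply `σ` coordinatewise and the last layer is
affine. -/

/-- The composition of the first `n` hidden layers `x ↦ σ(W x + b)` of an MLP. -/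
def mlpHidden (σ : ℝ → ℝ) (d : ℕ → ℕ)
    (W : ∀ i, Matrix (Fin (d (i + 1))) (Fin (d i)) ℝ)
    (b : ∀ i, Fin (d (i + 1)) → ℝ) : ∀ n, (Fin (d 0) → ℝ) → (Fin (d n) → ℝ)
  | 0, x => x
  | n + 1, x => fun j => σ ((W n).mulVec (mlpHidden σ d W b n x) j + b n j)

/-- The end-to-end function of an MLP of depth `M + 2`: the first `M + 1` layers use
the activation `σ` coordinatewise, the final layer is affine. -/
def mlpEndToEnd (σ : ℝ → ℝ) (M : ℕ) (d : ℕ → ℕ)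
    (W : ∀ i, Matrix (Fin (d (i + 1))) (Fin (d i)) ℝ)
    (b : ∀ i, Fin (d (i + 1)) → ℝ) (x : Fin (d 0) → ℝ) : Fin (d (M + 2)) → ℝ :=
  (W (M + 1)).mulVec (mlpHidden σ d W b (M + 1) x) + b (M + 1)

/-- **Intertwiner transformations of the weights preserve the MLP function.**
Given invertible matrices `A i, B i ∈ GL(d i, ℝ)` for the hidden widths
`i = 1, …, L - 1` with `σ(A i • y) = B i • σ(y)`, transforming the weights by
`W₁ ↦ A₁ W₁`, `b₁ ↦ A₁ b₁`, `Wᵢ ↦ Aᵢ Wᵢ Bᵢ₋₁⁻¹`, `bᵢ ↦ Aᵢ bᵢ` (for `1 < i < L`),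
`W_L ↦ W_L B_{L-1}⁻¹`, `b_L ↦ b_L` does not change the end-to-end function. -/
theorem mlp_intertwiner_reparametrization (σ : ℝ → ℝ) (M : ℕ) (d : ℕ → ℕ)
    (W W' : ∀ i, Matrix (Fin (d (i + 1))) (Fin (d i)) ℝ)
    (b b' : ∀ i, Fin (d (i + 1)) → ℝ)
    (A B : ∀ i, Matrix (Fin (d i)) (Fin (d i)) ℝ)
    (hA : ∀ i, 1 ≤ i → i ≤ M + 1 → IsUnit (A i))
    (hB : ∀ i, 1 ≤ i → i ≤ M + 1 → IsUnit (B i))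
    (hintertwine : ∀ i, 1 ≤ i → i ≤ M + 1 → ∀ y : Fin (d i) → ℝ,
      (fun j => σ ((A i).mulVec y j)) = (B i).mulVec (fun j => σ (y j)))
    (hW'_first : W' 0 = A 1 * W 0)
    (hb'_first : b' 0 = (A 1).mulVec (b 0))
    (hW'_mid : ∀ i, 1 ≤ i → i ≤ M → W' i = A (i + 1) * W i * (B i)⁻¹)
    (hb'_mid : ∀ i, 1 ≤ i → i ≤ M → b' i = (A (i + 1)).mulVec (b i))
    (hW'_last : W' (M + 1) = W (M + 1) * (B (M + 1))⁻¹)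
    (hb'_last : b' (M + 1) = b (M + 1)) :
    ∀ x : Fin (d 0) → ℝ, mlpEndToEnd σ M d W' b' x = mlpEndToEnd σ M d W b x := by
  intro x
  have cancel : ∀ i, 1 ≤ i → i ≤ M + 1 → (B i)⁻¹ * B i = 1 := fun i h1 h2 =>
    Matrix.nonsing_inv_mul _ ((Matrix.isUnit_iff_isUnit_det _).1 (hB i h1 h2))
  have key : ∀ n, n ≤ M →
      mlpHidden σ d W' b' (n + 1) x = (B (n + 1)).mulVec (mlpHidden σ d W b (n + 1) x) := by
    intro n
    induction n with
    | zero =>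
      intro _
      have h := hintertwine 1 le_rfl (by omega) ((W 0).mulVec x + b 0)
      rw [Matrix.mulVec_add, Matrix.mulVec_mulVec, ← hW'_first, ← hb'_first] at h
      exact h
    | succ n ih =>
      intro hn
      have h := hintertwine (n + 2) (by omega) (by omega)
        ((W (n + 1)).mulVec (mlpHidden σ d W b (n + 1) x) + b (n + 1))
      -- The factor `(B (n + 1))⁻¹` in the new weight undoes the `B (n + 1)` from layer `n + 1`.
      have e : (W' (n + 1)).mulVec (mlpHidden σ d W' b' (n + 1) x) =
          (A (n + 2)).mulVec ((W (n + 1)).mulVec (mlpHidden σ d W b (n + 1) x)) := by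
        rw [ih (by omega), hW'_mid (n + 1) (by omega) hn, Matrix.mulVec_mulVec,
          Matrix.mul_assoc, cancel (n + 1) (by omega) (by omega), Matrix.mul_one,
          Matrix.mulVec_mulVec]
      rw [Matrix.mulVec_add, ← e, ← hb'_mid (n + 1) (by omega) hn] at h
      exact h
  unfold mlpEndToEnd
  rw [key M le_rfl, hW'_last, hb'_last, Matrix.mulVec_mulVec, Matrix.mul_assoc,
    cancel (M + 1) (by omega) le_rfl, Matrix.mul_one]
end
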